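/- The Kullback–Leibler divergence is jointly lower semicontinuous with respect to weak convergence: if P_n converges weakly to P and Q_n converges weakly to Q on a Polish space X, then liminf_{n→∞} D_KL(P_n ‖ Q_n) ≥ D_KL(P ‖ Q). -/

import Mathlib

open MeasureTheory Filter Topology Classical
open scoped ENNReal

/-- Kullback–Leibler divergence, `⊤` when absolute continuity or integrability fails. -/
noncomputable def klDiv {X : Type*} [MeasurableSpace X] (P Q : Measure X) : EReal :=
  if P ≪ Q ∧ Integrable (llr P Q) P then ((∫ x, llr P Q x ∂P : ℝ) : EReal) else ⊤

namespace KLAux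

/-- The (affine in the measures) variational functional. -/
noncomputable def V {X : Type*} [MeasurableSpace X] (P Q : Measure X) (f : X → ℝ) : ℝ :=
  ∫ x, f x ∂P - ∫ x, (Real.exp (f x) - 1) ∂Q

lemma pointwise (r f : ℝ) (hr : 0 ≤ r) :
    r * f - (Real.exp f - 1) ≤ InformationTheory.klFun r := by
  rw [InformationTheory.klFun_apply]
  rcases hr.eq_or_lt with rfl | hr
  · have := Real.exp_pos f
    simp; linarith
  · have h1 := Real.add_one_le_exp (f - Real.log r)
    rw [Real.exp_sub, Real.exp_log hr, le_div_iff₀ hr] at h1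
    nlinarith

lemma exp_diff (x y C : ℝ) (hx : x ≤ C) : Real.exp x - Real.exp y ≤ Real.exp C * |x - y| := by
  have h1 := Real.add_one_le_exp (y - x)
  have h2 : Real.exp y = Real.exp x * Real.exp (y - x) := by rw [← Real.exp_add]; ring_nf
  have h3 := Real.exp_le_exp.2 hx
  have h4 := Real.exp_pos x
  have h5 := le_abs_self (x - y)
  have h6 := abs_nonneg (x - y)
  have h7 : Real.exp x * |x - y| ≤ Real.exp C * |x - y| := by gcongr
  have h8 : Real.exp x - Real.exp y ≤ Real.exp x * |x - y| := by
    rw [h2]; nlinarith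
  linarith

section
variable {X : Type*} [MeasurableSpace X]

lemma integrable_bdd (P : Measure X) [IsFiniteMeasure P] {f : X → ℝ} {C : ℝ} (hf : Measurable f)
    (hC : ∀ x, |f x| ≤ C) : Integrable f P :=
  Integrable.of_bound hf.aestronglyMeasurable C (ae_of_all _ hC)

lemma integrable_exp (P : Measure X) [IsFiniteMeasure P] {f : X → ℝ} {C : ℝ} (hf : Measurable f)
    (hC : ∀ x, |f x| ≤ C) : Integrable (fun x => Real.exp (f x)) P := by
  refine integrable_bdd P (C := Real.exp C) (by fun_prop) fun x => ?_
  rw [abs_of_pos (Real.exp_pos _)]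
  exact Real.exp_le_exp.2 ((le_abs_self _).trans (hC x))

lemma V_eq (P Q : Measure X) [IsFiniteMeasure P] [IsFiniteMeasure Q] (hPQ : P ≪ Q)
    {f : X → ℝ} {C : ℝ} (hf : Measurable f) (hC : ∀ x, |f x| ≤ C) :
    Integrable (fun x => (P.rnDeriv Q x).toReal * f x - (Real.exp (f x) - 1)) Q ∧
    V P Q f = ∫ x, ((P.rnDeriv Q x).toReal * f x - (Real.exp (f x) - 1)) ∂Q := by
  have i1 : Integrable (fun x => (P.rnDeriv Q x).toReal * f x) Q :=
    (integrable_rnDeriv_smul_iff hPQ).2 (integrable_bdd P hf hC)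
  have i2 : Integrable (fun x => Real.exp (f x) - 1) Q :=
    (integrable_exp Q hf hC).sub (integrable_const _)
  refine ⟨i1.sub i2, ?_⟩
  rw [V, integral_sub i1 i2, integral_toReal_rnDeriv_mul hPQ]

lemma V_le (P Q : Measure X) [IsProbabilityMeasure P] [IsProbabilityMeasure Q]
    {f : X → ℝ} {C : ℝ} (hf : Measurable f) (hC : ∀ x, |f x| ≤ C) :
    ((V P Q f : ℝ) : EReal) ≤ klDiv P Q := by
  unfold klDiv
  split_ifs with h
  · have h1 := InformationTheory.integral_klFun_rnDeriv h.1 h.2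
    simp only [probReal_univ, add_sub_cancel_right] at h1
    rw [EReal.coe_le_coe_iff, ← h1, (V_eq P Q h.1 hf hC).2]
    refine integral_mono (V_eq P Q h.1 hf hC).1
      ((InformationTheory.integrable_klFun_rnDeriv_iff h.1).2 h.2) fun x => ?_
    exact pointwise _ _ ENNReal.toReal_nonneg
  · exact le_top

lemma klDiv_ac (P Q : Measure X) [IsProbabilityMeasure P] [IsProbabilityMeasure Q] (h : P ≪ Q) :
    klDiv P Q = ((∫⁻ x, ENNReal.ofReal (InformationTheory.klFun (P.rnDeriv Q x).toReal) ∂Q : ℝ≥0∞) :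
      EReal) := by
  rw [← InformationTheory.klDiv_eq_lintegral_klFun_of_ac h]
  unfold klDiv
  split_ifs with h'
  · have h1 := InformationTheory.integral_klFun_rnDeriv h'.1 h'.2
    have h0 := InformationTheory.integral_llr_add_sub_measure_univ_nonneg h'.1 h'.2
    rw [InformationTheory.klDiv_of_ac_of_integrable h'.1 h'.2]
    simp only [probReal_univ, add_sub_cancel_right] at h0 ⊢
    rw [EReal.coe_ennreal_ofReal, max_eq_left h0]
  · rw [InformationTheory.klDiv_of_not_integrable (fun h2 => h' ⟨h, h2⟩)]
    rfl

/-- Truncated logarithm. -/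
noncomputable def tl (n : ℕ) (r : ℝ) : ℝ := Real.log (max (Real.exp (-n)) (min (Real.exp n) r))

lemma tl_meas (n : ℕ) : Measurable (tl n) := by unfold tl; fun_prop

lemma exp_tl (n : ℕ) (r : ℝ) : Real.exp (tl n r) = max (Real.exp (-n)) (min (Real.exp n) r) :=
  Real.exp_log (lt_max_of_lt_left (Real.exp_pos _))

lemma tl_abs (n : ℕ) (r : ℝ) : |tl n r| ≤ n := by
  have h : Real.exp (-(n:ℝ)) ≤ Real.exp n := Real.exp_le_exp.2 (by linarith [n.cast_nonneg (α := ℝ)])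
  rw [abs_le]
  constructor
  · rw [← Real.exp_le_exp, exp_tl]; exact le_max_left _ _
  · rw [← Real.exp_le_exp, exp_tl]; exact max_le h (min_le_left _ _)

lemma tl_nonneg (n : ℕ) (r : ℝ) (hr : 0 ≤ r) : 0 ≤ r * tl n r - (Real.exp (tl n r) - 1) := by
  have hn : (0:ℝ) ≤ n := n.cast_nonneg
  have h : Real.exp (-(n:ℝ)) ≤ Real.exp n := Real.exp_le_exp.2 (by linarith)
  -- key : s log s - s + 1 is nonnegative, and `(r - s) * log s` is nonnegative
  set f := tl n r with hf
  have h1 : 0 ≤ Real.exp f * f - (Real.exp f - 1) := by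
    have := InformationTheory.klFun_nonneg (Real.exp_pos f).le
    rw [InformationTheory.klFun_apply, Real.log_exp] at this
    linarith
  have h2 : 0 ≤ (r - Real.exp f) * f := by
    rcases le_total r (Real.exp (-(n:ℝ))) with h3 | h3
    · have e : Real.exp f = Real.exp (-(n:ℝ)) := by
        rw [hf, exp_tl, min_eq_right (h3.trans h), max_eq_left h3]
      have e2 := Real.exp_injective e
      rw [e2]
      nlinarith
    · rcases le_total r (Real.exp n) with h4 | h4
      · have e : Real.exp f = r := by
          rw [hf, exp_tl, min_eq_right h4, max_eq_right h3]
        rw [e]; simp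
      · have e : Real.exp f = Real.exp n := by
          rw [hf, exp_tl, min_eq_left h4, max_eq_right h]
        have e2 := Real.exp_injective e
        rw [e2]
        nlinarith
  nlinarith

lemma tl_tendsto (r : ℝ) (hr : 0 ≤ r) :
    Tendsto (fun n : ℕ => r * tl n r - (Real.exp (tl n r) - 1)) atTop
      (𝓝 (InformationTheory.klFun r)) := by
  have ht : Tendsto (fun n : ℕ => Real.exp (-(n:ℝ))) atTop (𝓝 0) :=
    Real.tendsto_exp_neg_atTop_nhds_zero.comp tendsto_natCast_atTop_atTop
  rcases hr.eq_or_lt with rfl | hr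
  · have : ∀ n : ℕ, (0:ℝ) * tl n 0 - (Real.exp (tl n 0) - 1) = 1 - Real.exp (-(n:ℝ)) := by
      intro n
      rw [exp_tl, min_eq_right (Real.exp_pos _).le, max_eq_left (Real.exp_pos _).le]
      ring
    simp_rw [this, InformationTheory.klFun_zero]
    simpa using ht.const_sub 1
  · have ht2 : Tendsto (fun n : ℕ => Real.exp (n:ℝ)) atTop atTop :=
      Real.tendsto_exp_atTop.comp tendsto_natCast_atTop_atTop
    refine tendsto_const_nhds.congr' ?_
    filter_upwards [ht.eventually_lt_const hr, ht2.eventually_ge_atTop r] with n h1 h2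
    rw [exp_tl, tl, min_eq_right h2, max_eq_right h1.le, InformationTheory.klFun_apply]
    ring

lemma exists_meas (P Q : Measure X) [IsProbabilityMeasure P] [IsProbabilityMeasure Q]
    (a : EReal) (ha : a < klDiv P Q) :
    ∃ (C : ℝ) (f : X → ℝ), Measurable f ∧ (∀ x, |f x| ≤ C) ∧ a < (V P Q f : ℝ) := by
  by_contra! H
  have h0 : (0 : EReal) ≤ a := by
    have := H 0 (fun _ => 0) measurable_const (by simp)
    simpa [V] using this
  have htop : a ≠ ⊤ := ne_top_of_lt ha
  lift a to ℝ using ⟨htop, fun h => by simp [h] at h0⟩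
  simp only [EReal.coe_le_coe_iff] at H
  by_cases hPQ : P ≪ Q
  · rw [klDiv_ac P Q hPQ] at ha
    refine absurd ha (not_lt.2 ?_)
    have key : ∫⁻ x, ENNReal.ofReal (InformationTheory.klFun (P.rnDeriv Q x).toReal) ∂Q
        ≤ ENNReal.ofReal a := by
      set F : ℕ → X → ℝ := fun n x => tl n (P.rnDeriv Q x).toReal with hF
      have hFm : ∀ n, Measurable (F n) := fun n =>
        (tl_meas n).comp (P.measurable_rnDeriv Q).ennreal_toReal
      have hFb : ∀ n x, |F n x| ≤ n := fun n x => tl_abs _ _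
      have hle : ∀ n, ∫⁻ x, ENNReal.ofReal ((P.rnDeriv Q x).toReal * F n x -
          (Real.exp (F n x) - 1)) ∂Q ≤ ENNReal.ofReal a := by
        intro n
        rw [← ofReal_integral_eq_lintegral_ofReal (V_eq P Q hPQ (hFm n) (hFb n)).1
          (ae_of_all _ fun x => tl_nonneg _ _ ENNReal.toReal_nonneg),
          ← (V_eq P Q hPQ (hFm n) (hFb n)).2]
        exact ENNReal.ofReal_le_ofReal (H n (F n) (hFm n) (hFb n))
      calc _ = ∫⁻ x, liminf (fun n => ENNReal.ofReal ((P.rnDeriv Q x).toReal * F n x -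
          (Real.exp (F n x) - 1))) atTop ∂Q := by
            refine lintegral_congr fun x => ?_
            exact (((ENNReal.continuous_ofReal.tendsto _).comp
              (tl_tendsto _ ENNReal.toReal_nonneg)).liminf_eq).symm
        _ ≤ liminf (fun n => ∫⁻ x, ENNReal.ofReal ((P.rnDeriv Q x).toReal * F n x -
          (Real.exp (F n x) - 1)) ∂Q) atTop := by
            refine lintegral_liminf_le fun n => ?_
            have := hFm n
            fun_prop
        _ ≤ liminf (fun _ : ℕ => ENNReal.ofReal a) atTop :=
            liminf_le_liminf (Eventually.of_forall hle)
        _ = _ := liminf_const _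
    have h1 := EReal.coe_ennreal_le_coe_ennreal_iff.2 key
    rwa [EReal.coe_ennreal_ofReal, max_eq_left (by exact_mod_cast h0)] at h1
  · have : ∃ A, MeasurableSet A ∧ Q A = 0 ∧ P A ≠ 0 := by
      by_contra! h
      exact hPQ (Measure.AbsolutelyContinuous.mk fun s hs hs0 => h s hs hs0)
    obtain ⟨A, hA, hQA, hPA⟩ := this
    have hp : 0 < P.real A := ENNReal.toReal_pos hPA (measure_ne_top _ _)
    have h := H |(a + 1) / P.real A| (A.indicator fun _ => (a + 1) / P.real A)
      (measurable_const.indicator hA) (fun x => by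
        by_cases hx : x ∈ A <;> simp [hx])
    have hz : ∫ x, (Real.exp (A.indicator (fun _ => (a + 1) / P.real A) x) - 1) ∂Q = 0 := by
      refine integral_eq_zero_of_ae ?_
      have : ∀ᵐ x ∂Q, x ∉ A := measure_eq_zero_iff_ae_notMem.1 hQA
      filter_upwards [this] with x hx
      simp [hx]
    rw [V, hz, integral_indicator_const _ hA, smul_eq_mul, mul_div_cancel₀ _ hp.ne'] at h
    linarith
end

lemma exists_cont {X : Type*} [MetricSpace X] [MeasurableSpace X] [BorelSpace X]
    (P Q : Measure X) [IsProbabilityMeasure P] [IsProbabilityMeasure Q]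
    (a : EReal) (ha : a < klDiv P Q) :
    ∃ (C : ℝ) (f : X → ℝ), Continuous f ∧ (∀ x, |f x| ≤ C) ∧ a < (V P Q f : ℝ) := by
  obtain ⟨b, hab, hb⟩ := exists_between ha
  obtain ⟨C, f, hf, hC, hV⟩ := exists_meas P Q b hb
  have haV := hab.trans hV
  obtain ⟨c, hac, hcV⟩ := EReal.lt_iff_exists_real_btwn.1 haV
  have hcV : c < V P Q f := by exact_mod_cast hcV
  have hK : 0 < 1 + Real.exp C := by positivity
  obtain ⟨g, hg, hgi⟩ := (integrable_bdd (P + Q) hf hC).exists_boundedContinuous_integral_sub_le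
    (ε := (V P Q f - c) / (2 * (1 + Real.exp C))) (by have := sub_pos.2 hcV; positivity)
  have hCn : ∀ _ : X, 0 ≤ C := fun x => (abs_nonneg _).trans (hC x)
  set u : X → ℝ := fun x => max (-C) (min C (g x)) with hu
  have huc : Continuous u := by fun_prop
  have hub : ∀ x, |u x| ≤ C := by
    intro x
    have := hCn x
    rw [abs_le]
    exact ⟨le_max_left _ _, max_le (by linarith) (min_le_left _ _)⟩
  have hfu : ∀ x, |f x - u x| ≤ ‖f x - g x‖ := by
    intro x
    have h1 := abs_le.1 (hC x)
    have e : f x = max (-C) (min C (f x)) := by rw [min_eq_right h1.2, max_eq_right h1.1]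
    have h2 := abs_max_sub_max_le_max (-C) (min C (f x)) (-C) (min C (g x))
    have h3 := abs_min_sub_min_le_max C (f x) C (g x)
    simp only [sub_self, abs_zero, abs_nonneg, max_eq_right] at h2 h3
    rw [← e] at h2
    exact h2.trans h3
  refine ⟨C, u, huc, hub, hac.trans ?_⟩
  rw [EReal.coe_lt_coe_iff]
  have hi : Integrable (fun x => ‖f x - g x‖) (P + Q) :=
    ((integrable_bdd (P + Q) hf hC).sub hgi).norm
  obtain ⟨hiP, hiQ⟩ := integrable_add_measure.1 hi
  rw [integral_add_measure hiP hiQ] at hg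
  have hP : ∫ x, f x ∂P - ∫ x, u x ∂P ≤ ∫ x, ‖f x - g x‖ ∂P := by
    rw [← integral_sub (integrable_bdd P hf hC) (integrable_bdd P huc.measurable hub)]
    exact integral_mono ((integrable_bdd P hf hC).sub (integrable_bdd P huc.measurable hub)) hiP
      fun x => (le_abs_self _).trans (hfu x)
  have i1 : Integrable (fun x => Real.exp (f x) - 1) Q :=
    (integrable_exp Q hf hC).sub (integrable_const _)
  have i2 : Integrable (fun x => Real.exp (u x) - 1) Q :=
    (integrable_exp Q huc.measurable hub).sub (integrable_const _)
  have hQ : ∫ x, (Real.exp (u x) - 1) ∂Q - ∫ x, (Real.exp (f x) - 1) ∂Q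
      ≤ Real.exp C * ∫ x, ‖f x - g x‖ ∂Q := by
    rw [← integral_sub i2 i1, ← integral_const_mul]
    refine integral_mono (i2.sub i1) (hiQ.const_mul _) fun x => ?_
    have h1 := exp_diff (u x) (f x) C ((le_abs_self _).trans (hub x))
    rw [abs_sub_comm] at h1
    have h2 : Real.exp C * |f x - u x| ≤ Real.exp C * ‖f x - g x‖ := by
      gcongr
      exact hfu x
    show (Real.exp (u x) - 1) - (Real.exp (f x) - 1) ≤ Real.exp C * ‖f x - g x‖
    linarith
  have hp0 : 0 ≤ ∫ x, ‖f x - g x‖ ∂P := integral_nonneg fun x => norm_nonneg _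
  have hq0 : 0 ≤ ∫ x, ‖f x - g x‖ ∂Q := integral_nonneg fun x => norm_nonneg _
  rw [le_div_iff₀ (by positivity)] at hg
  have hm1 : 0 ≤ Real.exp C * ∫ x, ‖f x - g x‖ ∂P := by positivity
  have hcV' := hcV
  unfold V at hg hcV' ⊢
  nlinarith

end KLAux

/-- Joint lower semicontinuity of the Kullback–Leibler divergence with respect to weak
convergence of probability measures on a Polish space. -/
theorem klDiv_jointly_lower_semicontinuous
    {X : Type*} [MetricSpace X] [CompleteSpace X] [TopologicalSpace.SeparableSpace X]
    [MeasurableSpace X] [BorelSpace X]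
    (P Q : ℕ → ProbabilityMeasure X) (Plim Qlim : ProbabilityMeasure X)
    (hP : Tendsto P atTop (𝓝 Plim)) (hQ : Tendsto Q atTop (𝓝 Qlim)) :
    klDiv (Plim : Measure X) (Qlim : Measure X)
      ≤ liminf (fun n => klDiv (P n : Measure X) (Q n : Measure X)) atTop := by
  refine le_of_forall_lt fun a ha => ?_
  obtain ⟨b, hab, hb⟩ := exists_between ha
  refine hab.trans_le ?_
  obtain ⟨C, f, hf, hC, hV⟩ := KLAux.exists_cont _ _ b hb
  have hE : ∀ x, ‖Real.exp (f x) - 1‖ ≤ Real.exp C + 1 := by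
    intro x
    refine (norm_sub_le _ _).trans ?_
    rw [norm_one, Real.norm_eq_abs, Real.abs_exp]
    have := Real.exp_le_exp.2 ((le_abs_self _).trans (hC x))
    linarith
  have t1 := (ProbabilityMeasure.tendsto_iff_forall_integral_tendsto.1 hP)
    (BoundedContinuousFunction.ofNormedAddCommGroup f hf C hC)
  have t2 := (ProbabilityMeasure.tendsto_iff_forall_integral_tendsto.1 hQ)
    (BoundedContinuousFunction.ofNormedAddCommGroup (fun x => Real.exp (f x) - 1)
      (by fun_prop) (Real.exp C + 1) hE)
  have t3 : Tendsto (fun n => ((KLAux.V (P n : Measure X) (Q n : Measure X) f : ℝ) : EReal)) atTop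
      (𝓝 ((KLAux.V (Plim : Measure X) (Qlim : Measure X) f : ℝ) : EReal)) :=
    (continuous_coe_real_ereal.tendsto _).comp (t1.sub t2)
  refine le_liminf_of_le (by isBoundedDefault) ?_
  filter_upwards [t3.eventually_const_lt hV] with n hn
  exact hn.le.trans (KLAux.V_le _ _ hf.measurable hC)
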